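/- Let K = V diag(ω) Vᵀ with V ∈ ℝ^{n×n} orthogonal, ω_j > 0 for j ≤ r and ω_j = 0 for j > r with r < n, and let Y ∈ ℝ^{n×C}. Fix i with Σ_{j=r+1}^n V_{ij}² > 0. Then as λ → 0⁺ the leave-one-out residual Δ^λ_{ik} = (Y_{ik} − (K(K+λI)⁻¹Y)_{ik})/(1 − (K(K+λI)⁻¹)_{ii}) converges, for each k, to Δ_{ik} = Σ_{l=1}^n Y_{lk} · (Σ_{j=r+1}^n V_{ij}V_{lj}) / (Σ_{j=r+1}^n V_{ij}²). -/

import Mathlib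

open Matrix Finset Filter

open scoped Topology

/-!
If `K = V diag(ω) V⁻¹` and `A = K (K + lam)⁻¹`, then
`1 - A = lam (K + lam)⁻¹ = V diag(lam / (ω + lam)) V⁻¹`. As `lam → 0` through nonzero values,
`lam / (ω j + lam)` tends to `0` when `ω j ≠ 0` and is constantly `1` when `ω j = 0`, so `1 - A`
tends to the projection onto `ker K` along the range of `K`. The leave-one-out residual is the
quotient of an entry of `(1 - A) Y` by a diagonal entry of `1 - A`, hence converges as soon as that
diagonal entry has a nonzero limit.
-/

section Algebra

variable {ι κ R 𝕜 : Type*} [Fintype ι] [DecidableEq ι] [CommRing R] [Field 𝕜]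

/-- The smoother (hat) matrix `K (K + lam I)⁻¹` of kernel ridge regression, sending targets to
fitted values. If `K + lam I` is singular, then the inverse, and with it the smoother, is `0`. -/
noncomputable def ridgeSmoother (K : Matrix ι ι R) (lam : R) : Matrix ι ι R :=
  K * (K + lam • (1 : Matrix ι ι R))⁻¹

/-- The leave-one-out residual of point `i` in output coordinate `k`, in its closed form
`(Y - A Y) i k / (1 - A i i)` with `A` the ridge smoother. -/
noncomputable def looResidual (K : Matrix ι ι 𝕜) (Y : Matrix ι κ 𝕜) (lam : 𝕜) (i : ι) (k : κ) : 𝕜 :=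
  (Y i k - (ridgeSmoother K lam * Y) i k) / (1 - ridgeSmoother K lam i i)

/-- The projection onto the kernel of `V * diagonal ω * W` along its range, where `W` is meant to be
the inverse of `V`. -/
def kernelProjection [DecidableEq 𝕜] (V W : Matrix ι ι 𝕜) (ω : ι → 𝕜) : Matrix ι ι 𝕜 :=
  V * diagonal (fun j => if ω j = 0 then 1 else 0) * W

theorem kernelProjection_apply [DecidableEq 𝕜] (V W : Matrix ι ι 𝕜) (ω : ι → 𝕜) (a b : ι) :
    kernelProjection V W ω a b = ∑ j with ω j = 0, V a j * W j b := by
  rw [kernelProjection, mul_apply, sum_filter]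
  simp only [mul_diagonal, mul_ite, mul_one, mul_zero, ite_mul, zero_mul]

theorem looResidual_eq_one_sub_ridgeSmoother (K : Matrix ι ι 𝕜) (Y : Matrix ι κ 𝕜) (lam : 𝕜)
    (i : ι) (k : κ) :
    looResidual K Y lam i k =
      ((1 - ridgeSmoother K lam) * Y : Matrix ι κ 𝕜) i k / (1 - ridgeSmoother K lam) i i := by
  simp [looResidual, Matrix.sub_mul]

theorem one_sub_ridgeSmoother {K : Matrix ι ι R} {lam : R}
    (hK : IsUnit (K + lam • (1 : Matrix ι ι R)).det) :
    1 - ridgeSmoother K lam = lam • (K + lam • (1 : Matrix ι ι R))⁻¹ := by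
  set M := K + lam • (1 : Matrix ι ι R) with hM
  calc 1 - K * M⁻¹ = (M - K) * M⁻¹ := by rw [Matrix.sub_mul, mul_nonsing_inv M hK]
    _ = lam • M⁻¹ := by rw [hM, add_sub_cancel_left, smul_mul, Matrix.one_mul]

theorem conj_diagonal_add_smul_one {V W : Matrix ι ι R} (hVW : V * W = 1) (ω : ι → R) (lam : R) :
    V * diagonal ω * W + lam • (1 : Matrix ι ι R) = V * diagonal (fun j => ω j + lam) * W := by
  rw [← diagonal_add, ← smul_one_eq_diagonal, Matrix.mul_add, Matrix.add_mul,
    Matrix.mul_smul, Matrix.mul_one, smul_mul, hVW]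

theorem det_conj_diagonal {V W : Matrix ι ι R} (hVW : V * W = 1) (d : ι → R) :
    (V * diagonal d * W).det = ∏ j, d j := by
  rw [det_mul_right_comm, hVW, Matrix.one_mul, det_diagonal]

variable {V W : Matrix ι ι 𝕜}

theorem inv_conj_diagonal (hVW : V * W = 1) {d : ι → 𝕜} (hd : ∀ j, d j ≠ 0) :
    (V * diagonal d * W)⁻¹ = V * diagonal (fun j => (d j)⁻¹) * W := by
  have hWV : W * V = 1 := mul_eq_one_comm.mp hVW
  refine inv_eq_right_inv ?_
  calc V * diagonal d * W * (V * diagonal (fun j => (d j)⁻¹) * W)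
      = V * diagonal d * (W * V) * diagonal (fun j => (d j)⁻¹) * W := by
        simp only [Matrix.mul_assoc]
    _ = V * (diagonal d * diagonal fun j => (d j)⁻¹) * W := by
        rw [hWV, Matrix.mul_one, Matrix.mul_assoc V]
    _ = 1 := by simp [diagonal_mul_diagonal, hd, hVW]

theorem one_sub_ridgeSmoother_conj_diagonal (hVW : V * W = 1) {ω : ι → 𝕜} {lam : 𝕜}
    (hω : ∀ j, ω j + lam ≠ 0) :
    1 - ridgeSmoother (V * diagonal ω * W) lam =
      V * diagonal (fun j => lam / (ω j + lam)) * W := by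
  have hdet : IsUnit (V * diagonal ω * W + lam • (1 : Matrix ι ι 𝕜)).det := by
    rw [conj_diagonal_add_smul_one hVW, det_conj_diagonal hVW]
    exact (prod_ne_zero_iff.mpr fun j _ => hω j).isUnit
  rw [one_sub_ridgeSmoother hdet, conj_diagonal_add_smul_one hVW, inv_conj_diagonal hVW hω,
    ← smul_mul, ← Matrix.mul_smul, ← diagonal_smul]
  simp only [Pi.smul_def, smul_eq_mul, div_eq_mul_inv]

end Algebra

section Limit

theorem eventually_nhdsNE_zero_add_ne_zero {M : Type*} [AddZeroClass M] [TopologicalSpace M]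
    [T1Space M] [ContinuousAdd M] (a : M) : ∀ᶠ x in 𝓝[≠] 0, a + x ≠ 0 := by
  rcases eq_or_ne a 0 with rfl | ha
  · simp only [zero_add]
    exact eventually_mem_nhdsWithin
  · have hcont : ContinuousAt (fun x => a + x) 0 := by fun_prop
    exact (hcont.eventually_ne (by simpa using ha)).filter_mono nhdsWithin_le_nhds

variable {ι κ 𝕜 : Type*} [Field 𝕜] [TopologicalSpace 𝕜] [IsTopologicalDivisionRing 𝕜]
  [DecidableEq 𝕜]

theorem tendsto_div_add_self_nhdsNE_zero (a : 𝕜) :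
    Tendsto (fun x => x / (a + x)) (𝓝[≠] 0) (𝓝 (if a = 0 then 1 else 0)) := by
  split_ifs with ha
  · refine tendsto_const_nhds.congr' ?_
    filter_upwards [self_mem_nhdsWithin] with x hx
    rw [ha, zero_add, div_self hx]
  · have hcont : ContinuousAt (fun x => x / (a + x)) 0 :=
      continuousAt_id.div (by fun_prop) (by simpa using ha)
    simpa using hcont.tendsto.mono_left nhdsWithin_le_nhds

variable [T1Space 𝕜] [Fintype ι] [DecidableEq ι] {V W : Matrix ι ι 𝕜}

theorem tendsto_one_sub_ridgeSmoother (hVW : V * W = 1) (ω : ι → 𝕜) :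
    Tendsto (fun lam => 1 - ridgeSmoother (V * diagonal ω * W) lam) (𝓝[≠] 0)
      (𝓝 (kernelProjection V W ω)) := by
  have hshrink : Tendsto (fun lam j => lam / (ω j + lam)) (𝓝[≠] 0)
      (𝓝 fun j => if ω j = 0 then 1 else 0) :=
    tendsto_pi_nhds.mpr fun j => tendsto_div_add_self_nhdsNE_zero (ω j)
  have hconj : Continuous fun d : ι → 𝕜 => V * diagonal d * W := by fun_prop
  refine ((hconj.tendsto _).comp hshrink).congr' ?_
  filter_upwards [eventually_all.mpr fun j => eventually_nhdsNE_zero_add_ne_zero (ω j)]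
    with lam hlam
  exact (one_sub_ridgeSmoother_conj_diagonal hVW hlam).symm

theorem tendsto_looResidual (hVW : V * W = 1) (ω : ι → 𝕜) (Y : Matrix ι κ 𝕜) {i : ι}
    (hi : kernelProjection V W ω i i ≠ 0) (k : κ) :
    Tendsto (fun lam => looResidual (V * diagonal ω * W) Y lam i k) (𝓝[≠] 0)
      (𝓝 ((kernelProjection V W ω * Y) i k / kernelProjection V W ω i i)) := by
  have hlim := tendsto_one_sub_ridgeSmoother hVW ω
  have hnum : Continuous fun B : Matrix ι ι 𝕜 => (B * Y) i k :=
    (continuous_id.matrix_mul continuous_const).matrix_elem i k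
  have hden : Continuous fun B : Matrix ι ι 𝕜 => B i i := by fun_prop
  simp only [looResidual_eq_one_sub_ridgeSmoother]
  exact ((hnum.tendsto _).comp hlim).div ((hden.tendsto _).comp hlim) hi

theorem loo_residual_zero_reg_limit_rank_deficient_general (hVW : V * W = 1) (ω : ι → 𝕜)
    (Y : Matrix ι κ 𝕜) {i : ι} (hi : ∑ j with ω j = 0, V i j * W j i ≠ 0) (k : κ) :
    Tendsto (fun lam => looResidual (V * diagonal ω * W) Y lam i k) (𝓝[≠] 0)
      (𝓝 (∑ l, Y l k *
        ((∑ j with ω j = 0, V i j * W j l) / ∑ j with ω j = 0, V i j * W j i))) := by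
  simp only [← kernelProjection_apply] at hi ⊢
  convert tendsto_looResidual hVW ω Y hi k using 2
  rw [mul_apply, sum_div]
  exact sum_congr rfl fun l _ => by ring

end Limit

/-- **Zero-regularization limit of the leave-one-out residual, rank-deficient case.**
For `K = V diag(ω) Vᵀ` of rank `r < n` (`V` orthogonal), targets `Y`, and an index
`i` with `∑_{j ≥ r} V i j ² > 0`, the ridge leave-one-out residual
`Δ lam i k = (Y i k - (K(K+lam I)⁻¹Y) i k)/(1 - (K(K+lam I)⁻¹) i i)` converges, as
`lam → 0⁺`, to `∑ l, Y l k (∑_{j ≥ r} V i j V l j)/(∑_{j ≥ r} V i j ²)`. -/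
theorem loo_residual_zero_reg_limit_rank_deficient
    (n r C : ℕ) (hr : r < n)
    (V : Matrix (Fin n) (Fin n) ℝ) (hV : V ∈ Matrix.orthogonalGroup (Fin n) ℝ)
    (ω : Fin n → ℝ)
    (hω_pos : ∀ j : Fin n, (j : ℕ) < r → 0 < ω j)
    (hω_zero : ∀ j : Fin n, r ≤ (j : ℕ) → ω j = 0)
    (Y : Matrix (Fin n) (Fin C) ℝ)
    (K : Matrix (Fin n) (Fin n) ℝ) (hK : K = V * Matrix.diagonal ω * Vᵀ)
    (i : Fin n)
    (hi : 0 < ∑ j ∈ Finset.univ.filter (fun j : Fin n => r ≤ (j : ℕ)), V i j ^ 2)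
    (Δ : ℝ → Fin n → Fin C → ℝ)
    (hΔ : ∀ (lam : ℝ) (i : Fin n) (k : Fin C),
      Δ lam i k =
        (Y i k - (K * (K + lam • (1 : Matrix (Fin n) (Fin n) ℝ))⁻¹ * Y) i k) /
          (1 - (K * (K + lam • (1 : Matrix (Fin n) (Fin n) ℝ))⁻¹) i i)) :
    ∀ k : Fin C,
      Tendsto (fun lam : ℝ => Δ lam i k) (nhdsWithin 0 (Set.Ioi 0))
        (nhds (∑ l : Fin n, Y l k *
          ((∑ j ∈ Finset.univ.filter (fun j : Fin n => r ≤ (j : ℕ)), V i j * V l j) /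
            (∑ j ∈ Finset.univ.filter (fun j : Fin n => r ≤ (j : ℕ)), V i j ^ 2)))) := by
  intro k
  have hVV : V * Vᵀ = 1 := (mem_orthogonalGroup_iff (Fin n) ℝ).mp hV
  have hker : univ.filter (fun j : Fin n => r ≤ (j : ℕ)) =
      univ.filter (fun j => ω j = 0) :=
    filter_congr fun j _ =>
      ⟨hω_zero j, fun hj => not_lt.mp fun hjr => (hω_pos j hjr).ne' hj⟩
  simp only [hker, sq, hΔ, hK] at hi ⊢
  exact (loo_residual_zero_reg_limit_rank_deficient_general hVV ω Y hi.ne' k).mono_left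
    (nhdsWithin_mono 0 fun _ hlam => ne_of_gt hlam)
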